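/- Let k ≥ 3 and 1 ≤ j ≤ k−1 be integers and let p = (j·log n + c_n)/C(n,k−j). If c_n → −∞, then with high probability H^k(n,p) contains an isolated j-set, and in particular is not j-connected. -/

import Mathlib

open Filter Asymptotics

open scoped Classical

noncomputable section

/-- The collection of all `k`-element subsets of the vertex set `Fin n`,
    i.e. all potential edges of a `k`-uniform hypergraph on `n` vertices. -/
def kSets (n k : ℕ) : Finset (Finset (Fin n)) :=
  Finset.powersetCard k (Finset.univ : Finset (Fin n))

/-- The probability that the binomial random `k`-uniform hypergraph `H^k(n,p)`
    (each `k`-set an edge independently with probability `p`) has property `Q`. -/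
def binomProb (n k : ℕ) (p : ℝ) (Q : Finset (Finset (Fin n)) → Prop) : ℝ :=
  ∑ H ∈ (kSets n k).powerset,
    (if Q H then p ^ H.card * (1 - p) ^ ((kSets n k).card - H.card) else 0)

/-- The expectation of a real-valued random variable `X` of `H^k(n,p)`. -/
def binomExp (n k : ℕ) (p : ℝ) (X : Finset (Finset (Fin n)) → ℝ) : ℝ :=
  ∑ H ∈ (kSets n k).powerset,
    p ^ H.card * (1 - p) ^ ((kSets n k).card - H.card) * X H

/-- The degree of a vertex set `J` in the hypergraph with edge set `H`:
    the number of edges containing `J`. -/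
def setDegree {n : ℕ} (H : Finset (Finset (Fin n))) (J : Finset (Fin n)) : ℕ :=
  (H.filter (fun e => J ⊆ e)).card

/-- `J` is isolated in `H`: it is contained in no edge. -/
def IsIsolatedSet {n : ℕ} (H : Finset (Finset (Fin n))) (J : Finset (Fin n)) : Prop :=
  ∀ e ∈ H, ¬ J ⊆ e

/-- Two sets `J1`, `J2` are `j`-connected in the hypergraph with edge set `H`:
    there is a walk of edges from one to the other in which consecutive edges
    intersect in at least `j` vertices. -/
def JConn {n : ℕ} (j : ℕ) (H : Finset (Finset (Fin n))) (J1 J2 : Finset (Fin n)) : Prop :=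
  ∃ e1 ∈ H, ∃ e2 ∈ H, J1 ⊆ e1 ∧ J2 ⊆ e2 ∧
    Relation.ReflTransGen (fun e f => e ∈ H ∧ f ∈ H ∧ j ≤ (e ∩ f).card) e1 e2

/-- The hypergraph with edge set `H` is `j`-connected:
    all `j`-sets lie in a single `j`-component, i.e. are pairwise `j`-connected. -/
def JConnectedHG (n j : ℕ) (H : Finset (Finset (Fin n))) : Prop :=
  ∀ J1 J2 : Finset (Fin n), J1.card = j → J2.card = j → JConn j H J1 J2

/-- `C` is a `j`-component of `H`: a maximal nonempty set of pairwise `j`-connected `j`-sets. -/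
def IsJComponent (n j : ℕ) (H : Finset (Finset (Fin n))) (C : Finset (Finset (Fin n))) : Prop :=
  C.Nonempty ∧ (∀ J ∈ C, J.card = j) ∧ (∀ J1 ∈ C, ∀ J2 ∈ C, JConn j H J1 J2) ∧
    ∀ J : Finset (Fin n), J.card = j → (∃ J' ∈ C, JConn j H J J') → J ∈ C

/-- `D_s`: the number of `j`-sets of degree exactly `s`. -/
def numDegSets (n j s : ℕ) (H : Finset (Finset (Fin n))) : ℕ :=
  ((Finset.powersetCard j (Finset.univ : Finset (Fin n))).filter
    (fun J => setDegree H J = s)).card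

/-- The Poisson probability mass function with mean `lam`. -/
def poissonPMF (lam : ℝ) (i : ℕ) : ℝ := Real.exp (-lam) * lam ^ i / (Nat.factorial i)

/-- Total variation distance between the distribution of `D_s` in `H^k(n,p)`
    and the Poisson distribution with mean `lam`. -/
def dTVpoisson (n k j s : ℕ) (p lam : ℝ) : ℝ :=
  (1 / 2) * ∑' i : ℕ, |binomProb n k p (fun H => numDegSets n j s H = i) - poissonPMF lam i|

/-- The probability that the uniform random hypergraph `H^k(n,M)` (chosen uniformly among
    all `k`-uniform hypergraphs on `Fin n` with exactly `M` edges) has property `Q`. -/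
def uniformProb (n k M : ℕ) (Q : Finset (Finset (Fin n)) → Prop) : ℝ :=
  (((Finset.powersetCard M (kSets n k)).filter Q).card : ℝ) /
    ((Finset.powersetCard M (kSets n k)).card : ℝ)


/-- The weight of a hypergraph. -/
def hgW (n k : ℕ) (p : ℝ) (H : Finset (Finset (Fin n))) : ℝ :=
  p ^ H.card * (1 - p) ^ ((kSets n k).card - H.card)

lemma sum_avoid {α : Type*} (S A : Finset α) (hA : A ⊆ S) (p : ℝ) :
    ∑ H ∈ S.powerset, (if Disjoint H A then p ^ H.card * (1 - p) ^ (S.card - H.card) else 0)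
      = (1 - p) ^ A.card := by
  rw [← Finset.sum_filter]
  have h1 : S.powerset.filter (fun H => Disjoint H A) = (S \ A).powerset := by
    ext H
    simp only [Finset.mem_filter, Finset.mem_powerset, Finset.subset_sdiff]
  rw [h1]
  have h2 : ∀ H ∈ (S \ A).powerset, p ^ H.card * (1 - p) ^ (S.card - H.card)
      = (1 - p) ^ A.card * (p ^ H.card * (1 - p) ^ ((S \ A).card - H.card)) := by
    intro H hH
    have h3 := Finset.card_le_card (Finset.mem_powerset.1 hH)
    have h4 := Finset.card_sdiff_add_card_eq_card hA
    have h5 : S.card - H.card = A.card + ((S \ A).card - H.card) := by omega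
    rw [h5, pow_add]; ring
  rw [Finset.sum_congr rfl h2, ← Finset.mul_sum, Finset.sum_pow_mul_eq_add_pow]
  simp

lemma card_super (n k : ℕ) (T : Finset (Fin n)) (hT : T.card ≤ k) :
    ((kSets n k).filter (fun e => T ⊆ e)).card = (n - T.card).choose (k - T.card) := by
  have : (Finset.powersetCard (k - T.card) Tᶜ).card = (n - T.card).choose (k - T.card) := by
    rw [Finset.card_powersetCard, Finset.card_compl, Fintype.card_fin]
  rw [← this]
  refine Finset.card_nbij' (fun e => e \ T) (fun e => e ∪ T) ?_ ?_ ?_ ?_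
  · intro e he
    simp only [kSets, Finset.coe_filter, Finset.mem_powersetCard, Set.mem_ofPred_eq] at he
    simp only [Finset.mem_coe, Finset.mem_powersetCard]
    refine ⟨fun x hx => by simp at hx ⊢; exact hx.2, ?_⟩
    rw [Finset.card_sdiff_of_subset he.2, he.1.2]
  · intro e he
    simp only [Finset.mem_coe, Finset.mem_powersetCard] at he
    simp only [kSets, Finset.coe_filter, Finset.mem_powersetCard, Set.mem_ofPred_eq]
    refine ⟨⟨Finset.subset_univ _, ?_⟩, Finset.subset_union_right⟩
    have hd : Disjoint e T := by
      rw [Finset.disjoint_left]; intro x hx; simpa using he.1 hx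
    rw [Finset.card_union_of_disjoint hd, he.2]; omega
  · intro e he
    simp only [kSets, Finset.coe_filter, Finset.mem_powersetCard, Set.mem_ofPred_eq] at he
    exact Finset.sdiff_union_of_subset he.2
  · intro e he
    simp only [Finset.mem_coe, Finset.mem_powersetCard] at he
    have hd : Disjoint e T := by
      rw [Finset.disjoint_left]; intro x hx; simpa using he.1 hx
    exact Finset.union_sdiff_cancel_right hd

/-- edges containing `J` -/
def sup (n k : ℕ) (J : Finset (Fin n)) : Finset (Finset (Fin n)) :=
  (kSets n k).filter (fun e => J ⊆ e)

lemma iso_iff {n k : ℕ} {H : Finset (Finset (Fin n))} (hH : H ⊆ kSets n k) (J : Finset (Fin n)) :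
    IsIsolatedSet H J ↔ Disjoint H (sup n k J) := by
  rw [Finset.disjoint_left]
  constructor
  · intro h e he hs
    exact h e he (Finset.mem_filter.1 hs).2
  · intro h e he hs
    exact h he (Finset.mem_filter.2 ⟨hH he, hs⟩)

/-- isolation indicator -/
def ind (n k : ℕ) (J : Finset (Fin n)) (H : Finset (Finset (Fin n))) : ℝ :=
  if Disjoint H (sup n k J) then 1 else 0

lemma exp_one (n k : ℕ) (p : ℝ) : ∑ H ∈ (kSets n k).powerset, hgW n k p H = 1 := by
  have := sum_avoid (kSets n k) ∅ (by simp) p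
  simpa [hgW] using this

lemma exp_ind (n k : ℕ) (p : ℝ) (J : Finset (Fin n)) :
    ∑ H ∈ (kSets n k).powerset, hgW n k p H * ind n k J H = (1 - p) ^ (sup n k J).card := by
  rw [← sum_avoid (kSets n k) (sup n k J) (Finset.filter_subset _ _) p]
  refine Finset.sum_congr rfl fun H _ => ?_
  simp [hgW, ind]

lemma exp_ind2 (n k : ℕ) (p : ℝ) (J J' : Finset (Fin n)) :
    ∑ H ∈ (kSets n k).powerset, hgW n k p H * (ind n k J H * ind n k J' H)
      = (1 - p) ^ (sup n k J ∪ sup n k J').card := by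
  rw [← sum_avoid (kSets n k) (sup n k J ∪ sup n k J')
    (Finset.union_subset (Finset.filter_subset _ _) (Finset.filter_subset _ _)) p]
  refine Finset.sum_congr rfl fun H _ => ?_
  simp only [hgW, ind, Finset.disjoint_union_right]
  by_cases h1 : Disjoint H (sup n k J) <;> by_cases h2 : Disjoint H (sup n k J') <;> simp [h1, h2]

lemma pair_bound (n k j : ℕ) (hjk : j + 1 ≤ k) (p : ℝ) (hp0 : 0 ≤ p) (hp1 : p < 1)
    (hD : p * ((n - (j + 1)).choose (k - (j + 1)) : ℝ) < 1)
    (J J' : Finset (Fin n)) (hJ : J.card = j) (hJ' : J'.card = j) (hne : J ≠ J') :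
    (1 - p) ^ (sup n k J ∪ sup n k J').card ≤
      ((1 - p) ^ ((n - j).choose (k - j))) ^ 2 *
        (1 / (1 - p * ((n - (j + 1)).choose (k - (j + 1)) : ℝ))) := by
  set D := (n - (j + 1)).choose (k - (j + 1)) with hDdef
  set N := (n - j).choose (k - j) with hN
  have c1 : (sup n k J).card = N := by
    rw [sup, card_super n k J (by omega), hJ]
  have c2 : (sup n k J').card = N := by
    rw [sup, card_super n k J' (by omega), hJ']
  have c3 : (sup n k J ∩ sup n k J').card ≤ D := by
    obtain ⟨v, hv, hvn⟩ : ∃ v ∈ J', v ∉ J := by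
      by_contra hcon
      push Not at hcon
      exact hne (Finset.eq_of_subset_of_card_le hcon (by omega)).symm
    have hc : (insert v J).card = j + 1 := by rw [Finset.card_insert_of_notMem hvn, hJ]
    have := card_super n k (insert v J) (by omega)
    rw [hc] at this
    rw [hDdef, ← this]
    apply Finset.card_le_card
    intro e he
    simp only [sup, Finset.mem_inter, Finset.mem_filter] at he
    simp only [Finset.mem_filter]
    exact ⟨he.1.1, Finset.insert_subset (he.2.2 hv) he.1.2⟩
  have c4 := Finset.card_union_add_card_inter (sup n k J) (sup n k J')
  have hber : 1 - p * (D : ℝ) ≤ (1 - p) ^ D := by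
    have := one_add_mul_le_pow (a := -p) (by linarith) D
    calc 1 - p * (D : ℝ) = 1 + (D : ℝ) * (-p) := by ring
      _ ≤ _ := this
      _ = _ := by ring
  rw [mul_one_div, le_div_iff₀ (by linarith), ← pow_mul]
  have q0 : 0 ≤ 1 - p := by linarith
  calc (1 - p) ^ (sup n k J ∪ sup n k J').card * (1 - p * (D : ℝ))
      ≤ (1 - p) ^ (sup n k J ∪ sup n k J').card * (1 - p) ^ D := by gcongr
    _ = (1 - p) ^ ((sup n k J ∪ sup n k J').card + D) := by rw [pow_add]
    _ ≤ _ := pow_le_pow_of_le_one q0 (by linarith) (by omega)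

lemma prob_bounds (n k j : ℕ) (hjk : j + 1 ≤ k) (hjn : j ≤ n) (p : ℝ) (hp0 : 0 ≤ p) (hp1 : p < 1)
    (hD : p * ((n - (j + 1)).choose (k - (j + 1)) : ℝ) < 1) :
    1 - (1 / ((n.choose j : ℝ) * (1 - p) ^ ((n - j).choose (k - j))) +
      (1 / (1 - p * ((n - (j + 1)).choose (k - (j + 1)) : ℝ)) - 1)) ≤
    binomProb n k p (fun H =>
        (∃ J : Finset (Fin n), J.card = j ∧ IsIsolatedSet H J) ∧ ¬ JConnectedHG n j H) ∧
    binomProb n k p (fun H =>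
        (∃ J : Finset (Fin n), J.card = j ∧ IsIsolatedSet H J) ∧ ¬ JConnectedHG n j H) ≤ 1 := by
  set Q : Finset (Finset (Fin n)) → Prop := fun H =>
        (∃ J : Finset (Fin n), J.card = j ∧ IsIsolatedSet H J) ∧ ¬ JConnectedHG n j H with hQ
  have hQiff : ∀ H, Q H ↔ ∃ J : Finset (Fin n), J.card = j ∧ IsIsolatedSet H J := by
    intro H
    refine ⟨fun h => h.1, fun h => ⟨h, fun hc => ?_⟩⟩
    obtain ⟨J, hJ, hiso⟩ := h
    obtain ⟨e1, he1, _, _, hs, _⟩ := hc J J hJ hJ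
    exact hiso e1 he1 hs
  have hw0 : ∀ H, 0 ≤ hgW n k p H := fun H =>
    mul_nonneg (pow_nonneg hp0 _) (pow_nonneg (by linarith) _)
  set P := (kSets n k).powerset with hP
  have hsplit : binomProb n k p Q + ∑ H ∈ P, (if Q H then 0 else hgW n k p H) = 1 := by
    rw [← exp_one n k p, binomProb, ← Finset.sum_add_distrib]
    refine Finset.sum_congr rfl fun H _ => ?_
    by_cases h : Q H <;> simp [h, hgW]
  have hneg0 : 0 ≤ ∑ H ∈ P, (if Q H then 0 else hgW n k p H) :=
    Finset.sum_nonneg fun H _ => by split_ifs; exacts [le_rfl, hw0 H]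
  refine ⟨?_, by linarith⟩
  set D := (n - (j + 1)).choose (k - (j + 1)) with hDdef
  set N := (n - j).choose (k - j) with hN
  set 𝒥 := Finset.powersetCard j (Finset.univ : Finset (Fin n)) with h𝒥
  have hc𝒥 : (𝒥.card : ℝ) = n.choose j := by simp [h𝒥]
  have hm𝒥 : ∀ J, J ∈ 𝒥 ↔ J.card = j := fun J => by simp [h𝒥, Finset.mem_powersetCard]
  set X : Finset (Finset (Fin n)) → ℝ := fun H => ∑ J ∈ 𝒥, ind n k J H with hX
  set μ : ℝ := (n.choose j : ℝ) * (1 - p) ^ N with hμ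
  have q0 : 0 < 1 - p := by linarith
  have hμ0 : 0 < μ := mul_pos (by exact_mod_cast Nat.choose_pos hjn) (pow_pos q0 _)
  have cN : ∀ J ∈ 𝒥, (sup n k J).card = N := by
    intro J hJ
    have := (hm𝒥 J).1 hJ
    rw [sup, card_super n k J (by omega), this]
  have hEX : ∑ H ∈ P, hgW n k p H * X H = μ := by
    simp only [hX, Finset.mul_sum]
    rw [Finset.sum_comm, Finset.sum_congr rfl (fun J hJ => (exp_ind n k p J).trans (by rw [cN J hJ]))]
    simp [hμ, hc𝒥]
  set R : ℝ := 1 / (1 - p * (D : ℝ)) with hR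
  have hD0 : 0 ≤ p * (D : ℝ) := by positivity
  have hR0 : 0 < R := by rw [hR]; exact one_div_pos.2 (by linarith)
  have hEX2 : ∑ H ∈ P, hgW n k p H * (X H) ^ 2 ≤ μ + μ ^ 2 * R := by
    have h1 : ∑ H ∈ P, hgW n k p H * (X H) ^ 2
        = ∑ J ∈ 𝒥, ∑ J' ∈ 𝒥, (1 - p) ^ (sup n k J ∪ sup n k J').card := by
      simp only [hX, sq, Finset.sum_mul_sum]
      simp only [Finset.mul_sum]
      rw [Finset.sum_comm]
      refine Finset.sum_congr rfl fun J _ => ?_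
      rw [Finset.sum_comm]
      exact Finset.sum_congr rfl fun J' _ => exp_ind2 n k p J J'
    rw [h1]
    calc ∑ J ∈ 𝒥, ∑ J' ∈ 𝒥, (1 - p) ^ (sup n k J ∪ sup n k J').card
        ≤ ∑ J ∈ 𝒥, ∑ J' ∈ 𝒥, ((if J = J' then (1 - p) ^ N else 0) + ((1 - p) ^ N) ^ 2 * R) := by
          refine Finset.sum_le_sum fun J hJ => Finset.sum_le_sum fun J' hJ' => ?_
          by_cases h : J = J'
          · subst h
            rw [Finset.union_self, cN J hJ]
            have : 0 ≤ ((1 - p) ^ N) ^ 2 * R := by positivity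
            simpa using this
          · have := pair_bound n k j hjk p hp0 hp1 hD J J' ((hm𝒥 J).1 hJ) ((hm𝒥 J').1 hJ') h
            rw [if_neg h, zero_add]
            exact this
      _ = μ + μ ^ 2 * R := by
          simp only [Finset.sum_add_distrib, Finset.sum_ite_eq, Finset.sum_const, nsmul_eq_mul]
          rw [Finset.sum_congr rfl (g := fun _ => (1 - p) ^ N) (fun J hJ => by simp [hJ])]
          simp only [Finset.sum_const, nsmul_eq_mul, hc𝒥, hμ]
          ring
  have hcheb : (∑ H ∈ P, (if Q H then 0 else hgW n k p H)) * μ ^ 2 ≤ μ + μ ^ 2 * R - μ ^ 2 := by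
    have h1 : ∑ H ∈ P, hgW n k p H * (X H - μ) ^ 2
        = ∑ H ∈ P, hgW n k p H * (X H) ^ 2 - μ ^ 2 := by
      have : ∀ H ∈ P, hgW n k p H * (X H - μ) ^ 2 = hgW n k p H * (X H) ^ 2
          - 2 * μ * (hgW n k p H * X H) + μ ^ 2 * hgW n k p H := fun H _ => by ring
      rw [Finset.sum_congr rfl this, Finset.sum_add_distrib, Finset.sum_sub_distrib,
        ← Finset.mul_sum, ← Finset.mul_sum, hEX, exp_one]
      ring
    calc (∑ H ∈ P, (if Q H then 0 else hgW n k p H)) * μ ^ 2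
        ≤ ∑ H ∈ P, hgW n k p H * (X H - μ) ^ 2 := by
          rw [Finset.sum_mul]
          refine Finset.sum_le_sum fun H hH => ?_
          by_cases h : Q H
          · simp only [h, if_true, zero_mul]
            exact mul_nonneg (hw0 H) (sq_nonneg _)
          · have hX0 : X H = 0 := by
              refine Finset.sum_eq_zero fun J hJ => ?_
              rw [hQiff] at h
              push Not at h
              have h2 := h J ((hm𝒥 J).1 hJ)
              rw [iso_iff (Finset.mem_powerset.1 hH)] at h2
              simp [ind, h2]
            simp [h, hX0]
      _ ≤ _ := by rw [h1]; linarith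
  have hfin : ∑ H ∈ P, (if Q H then 0 else hgW n k p H) ≤ 1 / μ + (R - 1) := by
    rw [← mul_le_mul_iff_left₀ (pow_pos hμ0 2)]
    refine hcheb.trans (le_of_eq ?_)
    field_simp
    ring
  linarith

lemma log_div_tendsto (a : ℝ) (m : ℕ) :
    Tendsto (fun n : ℕ => a * (Real.log n ^ m / n)) atTop (nhds 0) := by
  have h := (Real.isLittleO_pow_log_id_atTop (n := m)).tendsto_div_nhds_zero
  have h2 := (h.comp tendsto_natCast_atTop_atTop).const_mul a
  simpa [Function.comp_def] using h2

lemma one_sub_pow_ge (p : ℝ) (hp0 : 0 ≤ p) (hp : p ≤ 1 / 2) (M : ℕ) :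
    Real.exp (-(p * M + 2 * p * (p * M))) ≤ (1 - p) ^ M := by
  have h1 : Real.exp (-(p + 2 * p * p)) ≤ 1 - p := by
    rw [Real.exp_neg, inv_le_comm₀ (Real.exp_pos _) (by linarith)]
    have := Real.add_one_le_exp (p + 2 * p * p)
    refine le_trans ?_ this
    rw [inv_le_iff_one_le_mul₀ (by linarith)]
    nlinarith [mul_nonneg hp0 hp0, mul_nonneg (mul_nonneg hp0 hp0) (by linarith : 0 ≤ 1 / 2 - p)]
  calc Real.exp (-(p * M + 2 * p * (p * M))) = Real.exp (-(p + 2 * p * p)) ^ M := by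
        rw [← Real.exp_nat_mul]; ring_nf
    _ ≤ _ := pow_le_pow_left₀ (Real.exp_pos _).le h1 M

lemma choose_lower (n j : ℕ) (h : 2 * j ≤ n) :
    (n : ℝ) ^ j / (2 ^ j * j.factorial) ≤ n.choose j := by
  have h1 : ((n + 1 - j) ^ j : ℕ) ≤ j.factorial * n.choose j := by
    rw [← Nat.descFactorial_eq_factorial_mul_choose]
    exact Nat.pow_sub_le_descFactorial n j
  have h2 : n ^ j ≤ 2 ^ j * (n + 1 - j) ^ j := by
    rw [← mul_pow]; exact Nat.pow_le_pow_left (by omega) j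
  have h3 : n ^ j ≤ n.choose j * (2 ^ j * j.factorial) := by
    calc n ^ j ≤ 2 ^ j * (n + 1 - j) ^ j := h2
      _ ≤ 2 ^ j * (j.factorial * n.choose j) := by gcongr
      _ = _ := by ring
  rw [div_le_iff₀ (by positivity)]
  exact_mod_cast h3

/-- **Corollary, part 1.** Let `p = (j log n + c_n)/C(n,k-j)` (a probability). If `c_n → -∞`,
then with high probability `H^k(n,p)` contains an isolated `j`-set, and in particular is not
`j`-connected. -/
theorem below_threshold_not_connected (k j : ℕ) (hk : 3 ≤ k) (hj : 1 ≤ j) (hjk : j ≤ k - 1)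
    (p c : ℕ → ℝ)
    (hp01 : ∀ n : ℕ, 0 ≤ p n ∧ p n ≤ 1)
    (hcinf : Tendsto c atTop atBot)
    (hp : ∀ n : ℕ, p n = ((j : ℝ) * Real.log n + c n) / (n.choose (k - j) : ℝ)) :
    Tendsto (fun n : ℕ => binomProb n k (p n) (fun H =>
        (∃ J : Finset (Fin n), J.card = j ∧ IsIsolatedSet H J) ∧ ¬ JConnectedHG n j H))
      atTop (nhds 1) := by
  obtain ⟨r, hr⟩ : ∃ r, k = j + (r + 1) := ⟨k - j - 1, by omega⟩
  subst hr
  have hkj : j + (r + 1) - j = r + 1 := by omega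
  have hkj2 : j + (r + 1) - (j + 1) = r := by omega
  rw [hkj] at hp
  -- basic eventual bounds
  have hc0 : ∀ᶠ n in atTop, c n ≤ 0 := hcinf.eventually_le_atBot 0
  have key : ∀ᶠ n : ℕ in atTop,
      p n * (n.choose (r + 1) : ℝ) = j * Real.log n + c n ∧
      p n * ((n - (j + 1)).choose r : ℝ) ≤ ((r + 1) * j : ℝ) * (Real.log n ^ 1 / n) ∧
      p n ≤ ((r + 1) * j : ℝ) * (Real.log n ^ 1 / n) ∧
      2 * p n * (p n * (n.choose (r + 1) : ℝ)) ≤ (2 * (r + 1) * j * j : ℝ) * (Real.log n ^ 2 / n) := by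
    filter_upwards [hc0, eventually_ge_atTop (r + 2)] with n hcn hn
    have hn0 : (0 : ℝ) < n := by exact_mod_cast (by omega : 0 < n)
    have hM0 : (0 : ℝ) < n.choose (r + 1) := by exact_mod_cast Nat.choose_pos (by omega)
    have e1 : p n * (n.choose (r + 1) : ℝ) = j * Real.log n + c n := by
      rw [hp n, div_mul_cancel₀ _ hM0.ne']
    have hlog : 0 ≤ Real.log n := Real.log_natCast_nonneg n
    have hp0 := (hp01 n).1
    have e2 : p n * (n.choose (r + 1) : ℝ) ≤ j * Real.log n := by linarith
    have e3 : (n : ℝ) * ((n - 1).choose r : ℝ) = (r + 1) * (n.choose (r + 1) : ℝ) := by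
      obtain ⟨m, rfl⟩ : ∃ m, n = m + 1 := ⟨n - 1, by omega⟩
      have := Nat.add_one_mul_choose_eq m r
      rw [Nat.add_sub_cancel]
      have h : ((m + 1) * m.choose r : ℝ) = (m + 1).choose (r + 1) * (r + 1) := by exact_mod_cast this
      push_cast
      linarith
    have e4 : p n * ((n - 1).choose r : ℝ) ≤ ((r + 1) * j : ℝ) * (Real.log n ^ 1 / n) := by
      rw [pow_one, ← mul_div_assoc, le_div_iff₀ hn0]
      calc p n * ((n - 1).choose r : ℝ) * n = (r + 1) * (p n * (n.choose (r + 1) : ℝ)) := by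
            linear_combination (p n) * e3
        _ ≤ (r + 1) * (j * Real.log n) := by gcongr
        _ = _ := by ring
    have e5 : p n ≤ ((r + 1) * j : ℝ) * (Real.log n ^ 1 / n) := by
      refine le_trans ?_ e4
      have : (1 : ℝ) ≤ ((n - 1).choose r : ℝ) := by
        exact_mod_cast Nat.choose_pos (by omega)
      exact le_mul_of_one_le_right hp0 this
    refine ⟨e1, le_trans ?_ e4, e5, ?_⟩
    · gcongr
      omega
    · calc 2 * p n * (p n * (n.choose (r + 1) : ℝ))
          ≤ 2 * (((r + 1) * j : ℝ) * (Real.log n ^ 1 / n)) * (j * Real.log n) := by gcongr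
        _ = _ := by ring
  have t1 := log_div_tendsto ((r + 1) * j : ℝ) 1
  have t2 := log_div_tendsto (2 * (r + 1) * j * j : ℝ) 2
  set μ : ℕ → ℝ := fun n => (n.choose j : ℝ) * (1 - p n) ^ ((n - j).choose (r + 1)) with hμ
  have tμ : Tendsto μ atTop atTop := by
    have tl : Tendsto (fun n => (Real.exp (-1) / (2 ^ j * j.factorial)) * Real.exp (-c n)) atTop atTop :=
      Tendsto.const_mul_atTop (by positivity)
        (Real.tendsto_exp_atTop.comp (tendsto_neg_atBot_atTop.comp hcinf))
    refine tendsto_atTop_mono' _ ?_ tl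
    filter_upwards [key, t1.eventually_le_const (by norm_num : (0 : ℝ) < 1 / 2),
      t2.eventually_le_const (by norm_num : (0 : ℝ) < 1), eventually_ge_atTop (2 * j + 1)]
      with n ⟨k1, k2, k3, k4⟩ h1 h2 hn
    have hn0 : (0 : ℝ) < n := by exact_mod_cast (by omega : 0 < n)
    have hp0 := (hp01 n).1
    have b1 := one_sub_pow_ge (p n) hp0 (k3.trans h1) (n.choose (r + 1))
    have b2 : Real.exp (-(j * Real.log n + c n + 1)) ≤ (1 - p n) ^ (n.choose (r + 1)) := by
      refine le_trans (Real.exp_le_exp.2 ?_) b1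
      linarith
    have b3 : (1 - p n) ^ (n.choose (r + 1)) ≤ (1 - p n) ^ ((n - j).choose (r + 1)) :=
      pow_le_pow_of_le_one (by linarith) (by linarith) (Nat.choose_le_choose _ (by omega))
    have b4 : Real.exp (-(j * Real.log n + c n + 1)) = Real.exp (-1) * Real.exp (-c n) / n ^ j := by
      rw [← Real.exp_add, eq_div_iff (by positivity)]
      nth_rewrite 2 [← Real.exp_log hn0]
      rw [← Real.exp_nat_mul, ← Real.exp_add]
      ring_nf
    calc (Real.exp (-1) / (2 ^ j * j.factorial)) * Real.exp (-c n)
        = (n : ℝ) ^ j / (2 ^ j * j.factorial) * (Real.exp (-1) * Real.exp (-c n) / n ^ j) := by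
          field_simp
      _ ≤ (n.choose j : ℝ) * (1 - p n) ^ ((n - j).choose (r + 1)) := by
          rw [← b4]
          exact mul_le_mul (choose_lower n j (by omega)) (b2.trans b3) (Real.exp_pos _).le (by positivity)
  have tD : Tendsto (fun n => p n * ((n - (j + 1)).choose r : ℝ)) atTop (nhds 0) :=
    squeeze_zero' (Eventually.of_forall fun n => mul_nonneg (hp01 n).1 (by positivity))
      (key.mono fun n h => h.2.1) t1
  have tlow : Tendsto (fun n => 1 - (1 / μ n + (1 / (1 - p n * ((n - (j + 1)).choose r : ℝ)) - 1)))
      atTop (nhds 1) := by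
    have a1 : Tendsto (fun n => 1 / μ n) atTop (nhds 0) := by
      simp only [one_div]
      exact tμ.inv_tendsto_atTop
    have a2 : Tendsto (fun n => 1 / (1 - p n * ((n - (j + 1)).choose r : ℝ))) atTop (nhds (1 / (1 - 0))) :=
      Tendsto.div tendsto_const_nhds (tendsto_const_nhds.sub tD) (by norm_num)
    have := (tendsto_const_nhds (x := (1 : ℝ))).sub (a1.add (a2.sub (tendsto_const_nhds (x := (1 : ℝ)))))
    simpa using this
  have hev : ∀ᶠ n : ℕ in atTop,
      1 - (1 / μ n + (1 / (1 - p n * ((n - (j + 1)).choose r : ℝ)) - 1)) ≤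
        binomProb n (j + (r + 1)) (p n) (fun H =>
          (∃ J : Finset (Fin n), J.card = j ∧ IsIsolatedSet H J) ∧ ¬ JConnectedHG n j H) ∧
      binomProb n (j + (r + 1)) (p n) (fun H =>
        (∃ J : Finset (Fin n), J.card = j ∧ IsIsolatedSet H J) ∧ ¬ JConnectedHG n j H) ≤ 1 := by
    filter_upwards [key, t1.eventually_le_const (by norm_num : (0 : ℝ) < 1 / 2),
      eventually_ge_atTop j] with n ⟨k1, k2, k3, k4⟩ h1 hn
    have := prob_bounds n (j + (r + 1)) j (by omega) hn (p n) (hp01 n).1 (by linarith)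
      (by rw [hkj2]; linarith)
    rw [hkj, hkj2] at this
    exact this
  exact tendsto_of_tendsto_of_tendsto_of_le_of_le' tlow tendsto_const_nhds
    (hev.mono fun n h => h.1) (hev.mono fun n h => h.2)

end
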